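/- Let n be a natural number and let S' ⊆ ℝ be a set with 0 ∈ S' such that for every A ∈ ℝ the intersection S' ∩ [A, ∞) is finite. Let 𝒮 be a nonempty set of real polynomials such that every F ∈ 𝒮 has degree < n and every coefficient of every F ∈ 𝒮 lies in S'. Then there exist a polynomial G ∈ 𝒮 and a real number ε₀ > 0 such that for every F ∈ 𝒮 with F ≠ G and every ε with 0 < ε ≤ ε₀ one has F(ε) < G(ε). -/

import Mathlib

open Polynomial in
lemma aux_bound (M : ℝ) (hM : 0 ≤ M) (n : ℕ) : ∀ F : Polynomial ℝ, (∀ i, n ≤ i → F.coeff i = 0) →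
    (∀ i, F.coeff i ≤ M) → ∀ ε : ℝ, 0 < ε → ε ≤ 1 → F.eval ε ≤ n * M := by
  induction n with
  | zero =>
    intro F h _ ε _ _
    have : F = 0 := by ext i; simpa using h i (Nat.zero_le i)
    simp [this]
  | succ n ih =>
    intro F h hc ε h0 h1
    have h2 := ih F.divX (fun i hi => by rw [coeff_divX]; exact h _ (by omega))
      (fun i => by rw [coeff_divX]; exact hc _) ε h0 h1
    have h3 : F.eval ε = F.divX.eval ε * ε + F.coeff 0 := by
      conv_lhs => rw [← divX_mul_X_add F]
      simp
    have h4 := hc 0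
    have h5 : 0 ≤ (n : ℝ) * M := by positivity
    push_cast
    nlinarith

open Polynomial in
lemma aux_main (S' : Set ℝ)
    (hfin : ∀ A : ℝ, (S' ∩ Set.Ici A).Finite) (M : ℝ) (hM : 0 ≤ M) (hSM : ∀ s ∈ S', s ≤ M) (n : ℕ) :
    ∀ (𝒮 : Set (Polynomial ℝ)), 𝒮.Nonempty →
    (∀ F ∈ 𝒮, ∀ i, n ≤ i → F.coeff i = 0) →
    (∀ F ∈ 𝒮, ∀ i : ℕ, F.coeff i ∈ S') →
    ∃ G ∈ 𝒮, ∃ ε₀ : ℝ, 0 < ε₀ ∧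
      ∀ F ∈ 𝒮, F ≠ G → ∀ ε : ℝ, 0 < ε → ε ≤ ε₀ → F.eval ε < G.eval ε := by
  induction n with
  | zero =>
    intro 𝒮 ⟨G, hG⟩ h _
    have hz : ∀ F ∈ 𝒮, F = 0 := fun F hF => by ext i; simpa using h F hF i (Nat.zero_le i)
    exact ⟨G, hG, 1, one_pos, fun F hF hne => absurd ((hz F hF).trans (hz G hG).symm) hne⟩
  | succ n ih =>
    intro 𝒮 ⟨F0, hF0⟩ h hc
    have hev : ∀ (F : Polynomial ℝ) (ε : ℝ), F.eval ε = F.divX.eval ε * ε + F.coeff 0 := by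
      intro F ε
      conv_lhs => rw [← divX_mul_X_add F]
      simp
    -- maximal constant coefficient
    obtain ⟨F1, hF1, hmax⟩ : ∃ F1 ∈ 𝒮, ∀ F ∈ 𝒮, F.coeff 0 ≤ F1.coeff 0 := by
      have hf : ((fun F : Polynomial ℝ => F.coeff 0) '' 𝒮 ∩ Set.Ici (F0.coeff 0)).Finite := by
        refine (hfin (F0.coeff 0)).subset ?_
        rintro _ ⟨⟨F, hF, rfl⟩, hx⟩
        exact ⟨hc F hF 0, hx⟩
      obtain ⟨a, ⟨⟨F1, hF1, rfl⟩, ha⟩, hm⟩ := Set.exists_max_image _ id hf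
        ⟨F0.coeff 0, ⟨F0, hF0, rfl⟩, le_refl (F0.coeff 0)⟩
      refine ⟨F1, hF1, fun F hF => ?_⟩
      rcases le_total (F0.coeff 0) (F.coeff 0) with h1 | h1
      · exact hm _ ⟨⟨F, hF, rfl⟩, h1⟩
      · exact h1.trans ha
    set a := F1.coeff 0 with ha
    -- gap
    obtain ⟨m, hma, hm⟩ : ∃ m < a, ∀ s ∈ S', s < a → s ≤ m := by
      have hf : (insert (a-1) ((S' ∩ Set.Ici (a-1)) ∩ Set.Iio a)).Finite :=
        ((hfin (a-1)).subset Set.inter_subset_left).insert _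
      obtain ⟨m, hmem, hm⟩ := Set.exists_max_image _ id hf ⟨a-1, Set.mem_insert _ _⟩
      have h1 : a - 1 ≤ m := hm _ (Set.mem_insert _ _)
      refine ⟨m, ?_, fun s hs hsa => ?_⟩
      · rcases hmem with h2 | h2
        · rw [h2]; linarith
        · exact h2.2
      · rcases le_total (a-1) s with h2 | h2
        · exact hm _ (Or.inr ⟨⟨hs, h2⟩, hsa⟩)
        · exact h2.trans h1
    obtain ⟨_, ⟨G, ⟨hG, hGa⟩, rfl⟩, ε₁, hε₁, hlt⟩ := ih (divX '' {F | F ∈ 𝒮 ∧ F.coeff 0 = a})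
      ⟨_, F1, ⟨hF1, rfl⟩, rfl⟩
      (by rintro _ ⟨F, ⟨hF, _⟩, rfl⟩ i hi; rw [coeff_divX]; exact h F hF _ (by omega))
      (by rintro _ ⟨F, ⟨hF, _⟩, rfl⟩ i; rw [coeff_divX]; exact hc F hF _)
    obtain ⟨K, hK⟩ := (isCompact_Icc (a := (0:ℝ)) (b := 1)).exists_bound_of_continuousOn
      (f := fun x => G.divX.eval x) (Polynomial.continuous _).continuousOn
    have hK0 : 0 ≤ K := (norm_nonneg _).trans (hK 0 (by simp))
    have hD : 0 < n * M + K + 1 := by positivity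
    refine ⟨G, hG, min ε₁ (min 1 ((a - m) / (n * M + K + 1))), ?_, ?_⟩
    · have : 0 < a - m := by linarith
      positivity
    intro F hF hne ε h0 hle
    simp only [le_min_iff] at hle
    obtain ⟨l1, l2, l3⟩ := hle
    rw [le_div_iff₀ hD] at l3
    rw [hev F, hev G, hGa]
    rcases (hmax F hF).eq_or_lt with e | l
    · have := hlt F.divX ⟨F, ⟨hF, e⟩, rfl⟩ (fun hd => hne (by
        rw [← divX_mul_X_add F, ← divX_mul_X_add G, hd, e, hGa])) ε h0 l1
      rw [e]
      nlinarith
    · have b1 := hm _ (hc F hF 0) l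
      have b2 := aux_bound M hM n F.divX
        (fun i hi => by rw [coeff_divX]; exact h F hF _ (by omega))
        (fun i => by rw [coeff_divX]; exact hSM _ (hc F hF _)) ε h0 l2
      have b3 := (abs_le.1 (hK ε ⟨h0.le, l2⟩)).1
      have c1 := mul_le_mul_of_nonneg_right b2 h0.le
      have c2 := mul_le_mul_of_nonneg_right b3 h0.le
      nlinarith

theorem stmt_1 (n : ℕ) (S' : Set ℝ) (h0 : (0 : ℝ) ∈ S')
    (hfin : ∀ A : ℝ, (S' ∩ Set.Ici A).Finite)
    (𝒮 : Set (Polynomial ℝ)) (hne : 𝒮.Nonempty)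
    (hdeg : ∀ F ∈ 𝒮, F.degree < (n : WithBot ℕ))
    (hcoeff : ∀ F ∈ 𝒮, ∀ i : ℕ, F.coeff i ∈ S') :
    ∃ G ∈ 𝒮, ∃ ε₀ : ℝ, 0 < ε₀ ∧
      ∀ F ∈ 𝒮, F ≠ G → ∀ ε : ℝ, 0 < ε → ε ≤ ε₀ → F.eval ε < G.eval ε := by
  obtain ⟨M, hM⟩ := (hfin 0).bddAbove
  have hM0 : 0 ≤ M := hM ⟨h0, le_refl (0:ℝ)⟩
  refine aux_main S' hfin M hM0 (fun s hs => ?_) n 𝒮 hne (fun F hF i hi => ?_) hcoeff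
  · rcases le_total 0 s with h | h
    · exact hM ⟨hs, h⟩
    · exact h.trans hM0
  · exact Polynomial.coeff_eq_zero_of_degree_lt ((hdeg F hF).trans_le (by exact_mod_cast hi))
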